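/- arXiv:0705.3949 — 2 statements merged into one kernel-verified Lean document; each statement's English description precedes it below -/
import Mathlib

section
/- Fix a model-state pair M,Γ. For any two object terms t₁, t₂, any assignment v, and the object constant i identifying the state Γ in Sta (i.e. I(i) = (v*I)(↓id,Γ)), the following holds: (v*I)(t₁,Γ) = (v*I)(t₂,Γ) if and only if ⟨v(ϱ₁),…,v(ϱₙ), i⟩ ∈ FT((t₁=t₂)(ϱ₁,…,ϱₙ))(I_M), where ϱ₁,…,ϱₙ is the list of variables occurring in t₁,t₂. -/
namespace KripkeDB

/-- Variable kinds: object variables and concept variables. -/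
inductive VKind : Type
  | obj : VKind
  | con : VKind

/-- A first-order modal model: an augmented frame `⟨G, {R_π}, D_o, D_c⟩` together with an
interpretation `I`.  `State` is the nonempty set of states, `acc r` is the accessibility
relation `R_r` for each relation symbol `r : RelSym`, `Obj` is the nonempty object domain
`D_o`, and the `m` individual concepts (functions from states to objects, `m = |D_c|`)
are indexed by `Fin m` via the bijection `𝔠` (0-based: the concept indexed by `i` has
`𝔠`-value `i+1`).  The concept indexed by `0` is the distinguished concept `id`
(so `𝔠(id) = 1`), whose value uniquely identifies each state.  By the unique names
assumption, constants are identified with the objects/concepts they denote. -/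
structure Model where
  State : Type
  state_ne : Nonempty State
  Obj : Type
  obj_ne : Nonempty Obj
  RelSym : Type
  acc : RelSym → State → State → Prop
  m : ℕ
  m_pos : 0 < m
  concept : Fin m → State → Obj
  id_inj : ∀ Γ Δ : State, concept ⟨0, m_pos⟩ Γ = concept ⟨0, m_pos⟩ Δ → Γ = Δ

/-- Database values: the domain **dom** = D_o ∪ D_c ∪ Π consists of objects,
concept names and accessibility-relation names. -/
abbrev V (M : Model) : Type := M.Obj ⊕ (Fin M.m ⊕ M.RelSym)

/-- The id-value of a state: `(v*I)(↓id, Γ)`. -/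
def idval (M : Model) (Γ : M.State) : M.Obj := M.concept ⟨0, M.m_pos⟩ Γ

/-- A relation instance: a set of tuples over the database domain. -/
abbrev Inst (M : Model) : Type := Set (List (V M))

noncomputable def deflt (M : Model) : V M := Sum.inl (Classical.choice M.obj_ne)

/-- 1-based attribute access `t(j)`. -/
noncomputable def att (M : Model) (t : List (V M)) (j : ℕ) : V M := t.getD (j - 1) (deflt M)

/-- Projection `π_{j₁,…,jₚ}`. -/
noncomputable def proj (M : Model) (js : List ℕ) (I : Inst M) : Inst M :=
  { u | ∃ t ∈ I, u = js.map (att M t) }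

/-- Selection `σ_{j=k}` (attribute `j` equals attribute `k`). -/
noncomputable def selEq (M : Model) (j k : ℕ) (I : Inst M) : Inst M :=
  { t | t ∈ I ∧ att M t j = att M t k }

/-- Selection `σ_{j=c}` (attribute `j` equals the constant `c`). -/
noncomputable def selC (M : Model) (j : ℕ) (c : V M) (I : Inst M) : Inst M :=
  { t | t ∈ I ∧ att M t j = c }

/-- Cross product `I × J`. -/
def cprod (M : Model) (I J : Inst M) : Inst M :=
  { l | ∃ t ∈ I, ∃ u ∈ J, l = t ++ u }

/-- The `Sta`-tuple of a state `Γ`: its `i`-th entry is the value at `Γ` of the concept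
with `𝔠`-value `i`. -/
def staTuple (M : Model) (Γ : M.State) : List (V M) :=
  List.ofFn (fun i : Fin M.m => Sum.inl (M.concept i Γ))

/-- The instance of the relation `Sta` in the database instance `I_M` associated with `M`. -/
def Sta (M : Model) : Inst M := { l | ∃ Γ : M.State, l = staTuple M Γ }

/-- The instance of the unary relation `Obj` (instance `D_o`) in `I_M`. -/
def ObjI (M : Model) : Inst M := { l | ∃ o : M.Obj, l = [Sum.inl o] }

/-- The instance of the unary relation `Con` (instance `D_c`) in `I_M`. -/
def ConI (M : Model) : Inst M := { l | ∃ c : Fin M.m, l = [Sum.inr (Sum.inl c)] }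

/-- The instance of the ternary relation `Rel` in `I_M`: it contains `⟨a,b,π⟩` iff
`R_π(Γ,Δ)` where `a,b` are the id-values of `Γ,Δ`. -/
def RelI (M : Model) : Inst M :=
  { l | ∃ (r : M.RelSym) (Γ Δ : M.State), M.acc r Γ Δ ∧
      l = [Sum.inl (idval M Γ), Sum.inl (idval M Δ), Sum.inr (Sum.inr r)] }

/-- Membership of a database value in the domain of a variable kind
(`D_o` for object variables, `D_c` for concept variables). -/
def kindOk (M : Model) : VKind → V M → Prop
  | VKind.obj, x => ∃ o : M.Obj, x = Sum.inl o
  | VKind.con, x => ∃ c : Fin M.m, x = Sum.inr (Sum.inl c)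

/-- `VT(ϱ₁,…,ϱₙ)`: the cross product `D₁ × … × Dₙ` of the domain relations, where `Dᵢ`
is `Con` for a concept variable and `Obj` for an object variable
(for the empty list this is `{⟨⟩}`). -/
def VTl (M : Model) (ks : List VKind) : Inst M :=
  { l | List.Forall₂ (kindOk M) ks l }

/-- Object terms: object constants (identified with objects via unique names),
object variables (de Bruijn index `k` denotes the variable `ϱ_{k+1}`), and
relativized concept terms `↓c` for a concept constant `c`. -/
inductive OTm (M : Model) : Type
  | const : M.Obj → OTm M
  | var : ℕ → OTm M
  | down : Fin M.m → OTm M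

/-- Term evaluation `(v*I)(·, Γ)`. -/
def teval (M : Model) (v : ℕ → V M) (Γ : M.State) : OTm M → V M
  | OTm.const o => Sum.inl o
  | OTm.var k => v k
  | OTm.down c => Sum.inl (M.concept c Γ)

/-- The result of the term translation `TT`: an attribute index or a constant. -/
inductive TTRes (M : Model) : Type
  | idx : ℕ → TTRes M
  | con : V M → TTRes M

/-- The term translation `TT` with `n` variables in scope: `TT(c) = 'c'` for an object
constant, `TT(ϱ_k) = k`, and `TT(↓t) = n + 𝔠(t)` for a relativized term. -/
def TT (M : Model) (n : ℕ) : OTm M → TTRes M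
  | OTm.const o => TTRes.con (Sum.inl o)
  | OTm.var k => TTRes.idx (k + 1)
  | OTm.down c => TTRes.idx (n + (c.val + 1))

/-- The value in tuple `t` designated by a `TT`-result. -/
noncomputable def ttval (M : Model) (t : List (V M)) : TTRes M → V M
  | TTRes.idx j => att M t j
  | TTRes.con c => c

/-- Generalized selection `σ_{a=b}` where each side is an attribute index or a constant. -/
noncomputable def selT (M : Model) (a b : TTRes M) (I : Inst M) : Inst M :=
  { t | t ∈ I ∧ ttval M t a = ttval M t b }

/-- Generalized selection `σ_{a≠b}`. -/
noncomputable def selTne (M : Model) (a b : TTRes M) (I : Inst M) : Inst M :=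
  { t | t ∈ I ∧ ttval M t a ≠ ttval M t b }

/-- The set of (indices of) variables occurring in a term. -/
def tvars (M : Model) : OTm M → Set ℕ
  | OTm.var k => {k}
  | _ => ∅

/-- Formulas of the modal language.  Binders (`ex`, `all`, `lam`) bind the de Bruijn
variable `0`; in `⟨λϱ.φ⟩(↓c)` the abstracted variable is an object variable and the
argument term is the relativized concept term `↓c`. -/
inductive Fma (M : Model) : Type
  | eq : OTm M → OTm M → Fma M
  | ne : OTm M → OTm M → Fma M
  | not : Fma M → Fma M
  | and : Fma M → Fma M → Fma M
  | or : Fma M → Fma M → Fma M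
  | dia : M.RelSym → Fma M → Fma M
  | box : M.RelSym → Fma M → Fma M
  | ex : VKind → Fma M → Fma M
  | all : VKind → Fma M → Fma M
  | lam : Fin M.m → Fma M → Fma M

/-- Extending an assignment with a value for the freshly bound variable. -/
def consA (M : Model) (d : V M) (v : ℕ → V M) : ℕ → V M
  | 0 => d
  | k + 1 => v k

/-- Truth in a model: `M,Γ ⊩_v φ`. -/
def Truth (M : Model) : M.State → (ℕ → V M) → Fma M → Prop
  | Γ, v, Fma.eq t₁ t₂ => teval M v Γ t₁ = teval M v Γ t₂
  | Γ, v, Fma.ne t₁ t₂ => teval M v Γ t₁ ≠ teval M v Γ t₂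
  | Γ, v, Fma.not φ => ¬ Truth M Γ v φ
  | Γ, v, Fma.and φ ψ => Truth M Γ v φ ∧ Truth M Γ v ψ
  | Γ, v, Fma.or φ ψ => Truth M Γ v φ ∨ Truth M Γ v ψ
  | Γ, v, Fma.dia r φ => ∃ Δ : M.State, M.acc r Γ Δ ∧ Truth M Δ v φ
  | Γ, v, Fma.box r φ => ∀ Δ : M.State, M.acc r Γ Δ → Truth M Δ v φ
  | Γ, v, Fma.ex k φ => ∃ d : V M, kindOk M k d ∧ Truth M Γ (consA M d v) φ
  | Γ, v, Fma.all k φ => ∀ d : V M, kindOk M k d → Truth M Γ (consA M d v) φ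
  | Γ, v, Fma.lam c φ => Truth M Γ (consA M (Sum.inl (M.concept c Γ)) v) φ

/-- The translation `FT` of modal queries into relational algebra queries, evaluated on
`I_M`.  `ks` is the list of kinds of the free variables `ϱ₁,…,ϱₙ` (so `n = ks.length`).
The box clause is `FT([π]φ) = FT(¬⟨π⟩¬φ)`, written out. -/
noncomputable def FT (M : Model) : List VKind → Fma M → Inst M
  | ks, Fma.eq t₁ t₂ =>
      proj M (List.range' 1 (ks.length + 1))
        (selT M (TT M ks.length t₁) (TT M ks.length t₂) (cprod M (VTl M ks) (Sta M)))
  | ks, Fma.ne t₁ t₂ =>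
      proj M (List.range' 1 (ks.length + 1))
        (selTne M (TT M ks.length t₁) (TT M ks.length t₂) (cprod M (VTl M ks) (Sta M)))
  | ks, Fma.not φ =>
      cprod M (VTl M ks) (proj M [1] (Sta M)) \ FT M ks φ
  | ks, Fma.and φ ψ => FT M ks φ ∩ FT M ks ψ
  | ks, Fma.or φ ψ => FT M ks φ ∪ FT M ks ψ
  | ks, Fma.dia r φ =>
      proj M (List.range' 1 ks.length ++ [ks.length + 2])
        (selC M (ks.length + 4) (Sum.inr (Sum.inr r))
          (selEq M (ks.length + 1) (ks.length + 3) (cprod M (FT M ks φ) (RelI M))))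
  | ks, Fma.box r φ =>
      cprod M (VTl M ks) (proj M [1] (Sta M)) \
        proj M (List.range' 1 ks.length ++ [ks.length + 2])
          (selC M (ks.length + 4) (Sum.inr (Sum.inr r))
            (selEq M (ks.length + 1) (ks.length + 3)
              (cprod M (cprod M (VTl M ks) (proj M [1] (Sta M)) \ FT M ks φ) (RelI M))))
  | ks, Fma.ex k φ =>
      proj M (List.range' 2 (ks.length + 1)) (FT M (k :: ks) φ)
  | ks, Fma.all k φ =>
      proj M (List.range' 2 (ks.length + 1)) (FT M (k :: ks) φ) \
        proj M (List.range' 2 (ks.length + 1))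
          (cprod M (VTl M [k]) (proj M (List.range' 2 (ks.length + 1)) (FT M (k :: ks) φ)) \
            FT M (k :: ks) φ)
  | ks, Fma.lam c φ =>
      proj M (List.range' 2 (ks.length + 1))
        (selEq M 1 (ks.length + 3)
          (selEq M (ks.length + 2) (ks.length + 4)
            (cprod M (FT M (VKind.obj :: ks) φ) (proj M [c.val + 1, 1] (Sta M)))))

/-- Well-formedness of a term in a context of variable kinds. -/
def WFt (M : Model) (ks : List VKind) : OTm M → Prop
  | OTm.const _ => True
  | OTm.var k => ks[k]? = some VKind.obj
  | OTm.down _ => True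

/-- Well-formedness of a formula in a context of variable kinds: a modal query
`φ(ϱ₁,…,ϱₙ)` is a well-formed formula whose free variables are among `ϱ₁,…,ϱₙ`. -/
def WF (M : Model) : List VKind → Fma M → Prop
  | ks, Fma.eq t₁ t₂ => WFt M ks t₁ ∧ WFt M ks t₂
  | ks, Fma.ne t₁ t₂ => WFt M ks t₁ ∧ WFt M ks t₂
  | ks, Fma.not φ => WF M ks φ
  | ks, Fma.and φ ψ => WF M ks φ ∧ WF M ks ψ
  | ks, Fma.or φ ψ => WF M ks φ ∧ WF M ks ψ
  | ks, Fma.dia _ φ => WF M ks φ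
  | ks, Fma.box _ φ => WF M ks φ
  | ks, Fma.ex k φ => WF M (k :: ks) φ
  | ks, Fma.all k φ => WF M (k :: ks) φ
  | ks, Fma.lam _ φ => WF M (VKind.obj :: ks) φ

/-- An assignment conforms to a context of kinds if it maps object variables into `D_o`
and concept variables into `D_c`. -/
def Conf (M : Model) (ks : List VKind) (v : ℕ → V M) : Prop :=
  ∀ k : Fin ks.length, kindOk M (ks.get k) (v k)

/-!
A tuple of `VT × Sta` is a concatenation `l ++ staTuple M Δ` with `l` of length `n`, and
`π_{1,…,n+1}` cuts it down to `l` followed by the id-value of `Δ`. Since id-values identify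
states, this projection is injective on `VT × Sta`, so membership in the projection amounts to
membership of the uncut tuple; the attributes that `TT` selects there carry the values of the terms.
-/

section Attributes

variable {M : Model}

theorem att_append_left (l u : List (V M)) {j : ℕ} (hj : j < l.length) :
    att M (l ++ u) (j + 1) = l[j] := by
  simp [att, List.getElem?_append_left hj, List.getElem?_eq_getElem hj]

theorem att_append_right (l u : List (V M)) (j : ℕ) :
    att M (l ++ u) (l.length + (j + 1)) = att M u (j + 1) := by
  simp [att, ← Nat.add_assoc, List.getElem?_append_right]

theorem att_staTuple (Γ : M.State) (c : Fin M.m) :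
    att M (staTuple M Γ) (c + 1) = Sum.inl (M.concept c Γ) := by
  simp [att, staTuple]

theorem map_att_range'_append (l u : List (V M)) :
    (List.range' 1 l.length).map (att M (l ++ u)) = l := by
  refine List.ext_getElem (by simp) fun j _ hj => ?_
  rw [List.getElem_map, List.getElem_range', Nat.one_mul, Nat.add_comm, att_append_left l u hj]

theorem map_att_range'_append_staTuple (l : List (V M)) (Γ : M.State) :
    (List.range' 1 (l.length + 1)).map (att M (l ++ staTuple M Γ)) =
      l ++ [Sum.inl (idval M Γ)] := by
  have att_id : att M (l ++ staTuple M Γ) (1 + l.length) = Sum.inl (idval M Γ) := by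
    rw [Nat.add_comm]
    exact (att_append_right l _ 0).trans (att_staTuple Γ ⟨0, M.m_pos⟩)
  rw [List.range'_1_concat, List.map_append, map_att_range'_append, List.map_singleton, att_id]

end Attributes

section Projection

variable {M : Model} {ks : List VKind} {I : Inst M}

theorem length_eq_of_mem_VTl {l : List (V M)} (hl : l ∈ VTl M ks) : l.length = ks.length :=
  (List.Forall₂.length_eq hl).symm

theorem ofFn_mem_VTl {v : ℕ → V M} (hv : Conf M ks v) :
    List.ofFn (fun j : Fin ks.length => v j) ∈ VTl M ks :=
  List.forall₂_iff_get.2 ⟨by simp, fun j hj _ => by simpa using hv ⟨j, hj⟩⟩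

theorem append_staTuple_mem_cprod {l : List (V M)} {J : Inst M} (hl : l ∈ J) (Γ : M.State) :
    l ++ staTuple M Γ ∈ cprod M J (Sta M) :=
  ⟨l, hl, staTuple M Γ, ⟨Γ, rfl⟩, rfl⟩

theorem append_idval_mem_proj_iff (hI : I ⊆ cprod M (VTl M ks) (Sta M)) (l : List (V M))
    (Γ : M.State) :
    l ++ [Sum.inl (idval M Γ)] ∈ proj M (List.range' 1 (ks.length + 1)) I ↔
      l ++ staTuple M Γ ∈ I := by
  constructor
  · rintro ⟨t, ht, hproj⟩
    obtain ⟨l', hl', _, ⟨Δ, rfl⟩, rfl⟩ := hI ht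
    rw [← length_eq_of_mem_VTl hl', map_att_range'_append_staTuple] at hproj
    obtain ⟨rfl, hid⟩ := List.append_inj' hproj rfl
    obtain rfl : Γ = Δ := M.id_inj Γ Δ (Sum.inl_injective (List.singleton_injective hid))
    exact ht
  · intro ht
    obtain ⟨l', hl', _, ⟨Δ, rfl⟩, heq⟩ := hI ht
    obtain ⟨rfl, -⟩ := List.append_inj' heq (by simp [staTuple])
    exact ⟨_, ht, by rw [← length_eq_of_mem_VTl hl', map_att_range'_append_staTuple]⟩

end Projection

section Terms

variable {M : Model}

theorem ttval_TT_append_staTuple {n : ℕ} {t : OTm M} (ht : tvars M t ⊆ {k | k < n})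
    (v : ℕ → V M) (Γ : M.State) :
    ttval M (List.ofFn (fun j : Fin n => v j) ++ staTuple M Γ) (TT M n t) = teval M v Γ t := by
  cases t with
  | const o => rfl
  | var k =>
    have hk : k < n := ht rfl
    exact (att_append_left _ _ (by simpa using hk)).trans (List.getElem_ofFn _)
  | down c =>
    have hatt := att_append_right (List.ofFn fun j : Fin n => v j) (staTuple M Γ) c
    rw [List.length_ofFn, att_staTuple] at hatt
    exact hatt

theorem conf_replicate_obj (n : ℕ) (v : ℕ → M.Obj) :
    Conf M (List.replicate n VKind.obj) fun k => Sum.inl (v k) :=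
  fun k => by simp [kindOk]

end Terms

theorem atomic_eq_correspondence_general {M : Model} (Γ : M.State) {ks : List VKind}
    {t₁ t₂ : OTm M} (hvars : tvars M t₁ ∪ tvars M t₂ ⊆ {k | k < ks.length}) {v : ℕ → V M}
    (hv : Conf M ks v) :
    Truth M Γ v (Fma.eq t₁ t₂) ↔
      List.ofFn (fun j : Fin ks.length => v j) ++ [Sum.inl (idval M Γ)] ∈
        FT M ks (Fma.eq t₁ t₂) := by
  obtain ⟨hvars₁, hvars₂⟩ := Set.union_subset_iff.1 hvars
  have hmem := append_staTuple_mem_cprod (ofFn_mem_VTl hv) Γ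
  rw [FT, append_idval_mem_proj_iff (fun _ ht => ht.1), selT, Set.mem_ofPred_eq,
    ttval_TT_append_staTuple hvars₁, ttval_TT_append_staTuple hvars₂, Truth]
  exact (and_iff_right hmem).symm

/-- Fix a model-state pair `M,Γ`.  For object terms `t₁, t₂`, an
assignment `v`, and the object constant `i` identifying `Γ` in `Sta`
(`I(i) = (v*I)(↓id,Γ)`): `(v*I)(t₁,Γ) = (v*I)(t₂,Γ)` iff
`⟨v(ϱ₁),…,v(ϱₙ), i⟩ ∈ FT((t₁=t₂)(ϱ₁,…,ϱₙ))(I_M)`, where `ϱ₁,…,ϱₙ` is the list of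
variables occurring in `t₁,t₂` (de Bruijn indices `0,…,n-1`) and
`FT((t₁=t₂)(ϱ₁,…,ϱₙ)) = π_{1,…,n+1} σ_{TT(t₁)=TT(t₂)} (VT(ϱ₁,…,ϱₙ) × Sta)`. -/
theorem atomic_eq_correspondence (M : Model) (Γ : M.State) (n : ℕ) (t₁ t₂ : OTm M)
    (hvars : tvars M t₁ ∪ tvars M t₂ = {k : ℕ | k < n})
    (v : ℕ → M.Obj) (i : M.Obj) (hi : i = idval M Γ) :
    teval M (fun k => Sum.inl (v k)) Γ t₁ = teval M (fun k => Sum.inl (v k)) Γ t₂ ↔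
      (List.ofFn (fun j : Fin n => (Sum.inl (v j) : V M)) ++ [Sum.inl i]) ∈
        proj M (List.range' 1 (n + 1))
          (selT M (TT M n t₁) (TT M n t₂)
            (cprod M (VTl M (List.replicate n VKind.obj)) (Sta M))) := by
  subst hi
  simpa [FT, Truth] using
    atomic_eq_correspondence_general Γ (by simpa using hvars.subset) (conf_replicate_obj n v)

end KripkeDB
end

section
/- Let ∀ϱ φ(ϱ₁,…,ϱₙ) be a modal query (so φ has free variables ϱ,ϱ₁,…,ϱₙ), let U = FT(φ(ϱ,ϱ₁,…,ϱₙ)), and suppose (inductive hypothesis) that for every state Δ and assignment v: M,Δ ⊩_v φ(ϱ,ϱ₁,…,ϱₙ) iff ⟨v(ϱ),v(ϱ₁),…,v(ϱₙ), id_Δ⟩ ∈ U(I_M). Then for every state Γ and assignment v: M,Γ ⊩_v ∀ϱ φ(ϱ₁,…,ϱₙ) iff ⟨v(ϱ₁),…,v(ϱₙ), id_Γ⟩ ∈ (π_{2,…,n+2}U − π_{2,…,n+2}((VT(ϱ) × π_{2,…,n+2}U) − U))(I_M). -/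
namespace KripkeDB

section

variable {M : Model} {n : ℕ} {w : List (V M)}

theorem map_att_range'_two_cons (d : V M) (hw : w.length = n) :
    (List.range' 2 n).map (att M (d :: w)) = w := by
  refine List.ext_getElem (by simp [hw]) fun i _ hi => ?_
  have index_shift : 2 + i - 1 = i + 1 := by omega
  simp [att, index_shift, hi]

theorem length_eq_of_mem_proj {js : List ℕ} {I : Inst M} (hw : w ∈ proj M js I) :
    w.length = js.length := by
  obtain ⟨t, -, rfl⟩ := hw
  exact List.length_map _

theorem mem_proj_range'_two_of_cons_mem {U : Inst M} {d : V M} (hw : w.length = n)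
    (hd : d :: w ∈ U) : w ∈ proj M (List.range' 2 n) U :=
  ⟨d :: w, hd, (map_att_range'_two_cons d hw).symm⟩

theorem mem_cprod_singletons_iff {A : Set (V M)} {J : Inst M} {t : List (V M)} :
    t ∈ cprod M ((fun d => [d]) '' A) J ↔ ∃ d ∈ A, ∃ u ∈ J, t = d :: u :=
  Set.exists_mem_image

theorem mem_proj_range'_two_cprod_diff_iff {A : Set (V M)} {J U : Inst M}
    (hJ : ∀ u ∈ J, u.length = n) :
    w ∈ proj M (List.range' 2 n) (cprod M ((fun d => [d]) '' A) J \ U) ↔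
      w ∈ J ∧ ∃ d ∈ A, d :: w ∉ U := by
  constructor
  · rintro ⟨t, ⟨ht, htU⟩, rfl⟩
    obtain ⟨d, hd, u, hu, rfl⟩ := mem_cprod_singletons_iff.1 ht
    rw [map_att_range'_two_cons d (hJ u hu)]
    exact ⟨hu, d, hd, htU⟩
  · rintro ⟨hw, d, hd, hdU⟩
    exact mem_proj_range'_two_of_cons_mem (hJ w hw)
      ⟨mem_cprod_singletons_iff.2 ⟨d, hd, w, hw, rfl⟩, hdU⟩

/-- Relational division of `U`, of arity `n + 1`, by the unary relation with values `A`, matched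
against attribute 1. It is spelled out in the algebra exactly as in the `∀` clause of `FT`, so for
empty `A` it is `π_{2,…,n+1}U` and not the set of all `n`-tuples. -/
noncomputable def division (M : Model) (n : ℕ) (A : Set (V M)) (U : Inst M) : Inst M :=
  proj M (List.range' 2 n) U \
    proj M (List.range' 2 n)
      (cprod M ((fun d => [d]) '' A) (proj M (List.range' 2 n) U) \ U)

theorem mem_division_iff {A : Set (V M)} {U : Inst M} :
    w ∈ division M n A U ↔ w ∈ proj M (List.range' 2 n) U ∧ ∀ d ∈ A, d :: w ∈ U := by
  have length_proj : ∀ u ∈ proj M (List.range' 2 n) U, u.length = n := fun u hu => by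
    simpa using length_eq_of_mem_proj hu
  rw [division, Set.mem_sdiff, mem_proj_range'_two_cprod_diff_iff length_proj]
  push Not
  exact and_congr_right fun hw => ⟨fun h => h hw, fun h _ => h⟩

theorem mem_division_iff_of_nonempty {A : Set (V M)} {U : Inst M} (hA : A.Nonempty)
    (hw : w.length = n) : w ∈ division M n A U ↔ ∀ d ∈ A, d :: w ∈ U := by
  rw [mem_division_iff, and_iff_right_iff_imp]
  obtain ⟨d, hd⟩ := hA
  exact fun h => mem_proj_range'_two_of_cons_mem hw (h d hd)

end

theorem setOf_kindOk_nonempty (M : Model) : ∀ k : VKind, {d | kindOk M k d}.Nonempty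
  | VKind.obj => ⟨deflt M, _, rfl⟩
  | VKind.con => ⟨Sum.inr (Sum.inl ⟨0, M.m_pos⟩), _, rfl⟩

theorem VTl_singleton (M : Model) (k : VKind) :
    VTl M [k] = (fun d => [d]) '' {d | kindOk M k d} := by
  ext t
  simp [VTl, List.forall₂_cons_left_iff, eq_comm]

/-- **universal case.** Let `∀ϱ φ(ϱ₁,…,ϱₙ)` be a modal query, so `φ`
has free variables `ϱ,ϱ₁,…,ϱₙ` (semantics `Tφ`, with the value of `ϱ` as a separate
argument; translation image `U = FT(φ(ϱ,ϱ₁,…,ϱₙ))(I_M)`, whose tuples carry `ϱ` at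
attribute 1, `ϱ₁,…,ϱₙ` at attributes `2,…,n+1` and the state id at attribute `n+2`,
as recorded by `hU`).  Suppose (inductive hypothesis) that for every state `Δ` and
assignment: `M,Δ ⊩ φ(ϱ,ϱ₁,…,ϱₙ)` iff `⟨v(ϱ),v(ϱ₁),…,v(ϱₙ), id_Δ⟩ ∈ U`.  Then for
every state `Γ` and assignment `v`: `M,Γ ⊩_v ∀ϱ φ(ϱ₁,…,ϱₙ)` iff
`⟨v(ϱ₁),…,v(ϱₙ), id_Γ⟩ ∈ π_{2,…,n+2}U − π_{2,…,n+2}((VT(ϱ) × π_{2,…,n+2}U) − U)`. -/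
theorem all_case (M : Model) (n : ℕ) (ks : Fin n → VKind) (kq : VKind)
    (Tφ : M.State → V M → (Fin n → V M) → Prop) (U : Inst M)
    (hU : U ⊆ cprod M (VTl M (kq :: List.ofFn ks)) (proj M [1] (Sta M)))
    (IH : ∀ (Δ : M.State) (d : V M) (v : Fin n → V M),
      kindOk M kq d → (∀ j, kindOk M (ks j) (v j)) →
      (Tφ Δ d v ↔ (d :: (List.ofFn v ++ [Sum.inl (idval M Δ)])) ∈ U)) :
    ∀ (Γ : M.State) (v : Fin n → V M), (∀ j, kindOk M (ks j) (v j)) →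
      ((∀ d : V M, kindOk M kq d → Tφ Γ d v) ↔
        (List.ofFn v ++ [Sum.inl (idval M Γ)]) ∈
          proj M (List.range' 2 (n + 1)) U \
            proj M (List.range' 2 (n + 1))
              (cprod M (VTl M [kq]) (proj M (List.range' 2 (n + 1)) U) \ U)) := by
  intro Γ v hv
  have length_tuple : (List.ofFn v ++ [(Sum.inl (idval M Γ) : V M)]).length = n + 1 := by simp
  rw [VTl_singleton]
  calc (∀ d, kindOk M kq d → Tφ Γ d v)
    _ ↔ ∀ d, kindOk M kq d → d :: (List.ofFn v ++ [Sum.inl (idval M Γ)]) ∈ U :=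
      forall₂_congr fun d hd => IH Γ d v hd hv
    _ ↔ List.ofFn v ++ [Sum.inl (idval M Γ)] ∈ division M (n + 1) {d | kindOk M kq d} U :=
      (mem_division_iff_of_nonempty (setOf_kindOk_nonempty M kq) length_tuple).symm

end KripkeDB
end
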